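/- Let μ be a Borel probability measure on ℝ with ∫_ℝ e^{itx} dμ(x) = e^{−|t|^α} for all t (0 < α ≤ 2), and let w : ℝ → [0,∞) be an even measurable function with ∫_ℝ |u| w(u) du < ∞. Define h_μ(x) = ∫_ℝ u sin(ux) e^{−|u|^α} w(u) du. Then ∫_ℝ h_μ(x)² dμ(x) = ∫_ℝ ∫_ℝ (1/2)( e^{−|s−t|^α} − e^{−|s+t|^α} ) e^{−(|s|^α + |t|^α)} s t w(s) w(t) ds dt. -/

import Mathlib

open MeasureTheory Real

/-! Square the inner integral into a double integral, move the integral over `μ` inside by Fubini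
(the sines are bounded and the remaining factor is integrable), and evaluate `∫ sin(sx) sin(tx) dμ`
through `2 sin a sin b = cos(a - b) - cos(a + b)` and `∫ cos(tx) dμ = Re (charFun μ t)`. -/

section Fubini

variable {X U 𝕜 : Type*} [MeasurableSpace X] [MeasurableSpace U] [RCLike 𝕜]
  {μ : Measure X} [IsFiniteMeasure μ] {ν : Measure U} [SFinite ν]
  {k : X → U → 𝕜} {g : U → 𝕜} {C : ℝ}

lemma integrable_kernel_mul_kernel (hk : StronglyMeasurable (Function.uncurry k))
    (hkC : ∀ x u, ‖k x u‖ ≤ C) (hg : Integrable g ν) :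
    Integrable (fun q : X × U × U ↦ k q.1 q.2.1 * k q.1 q.2.2 * (g q.2.1 * g q.2.2))
      (μ.prod (ν.prod ν)) := by
  have hkk : StronglyMeasurable fun q : X × U × U ↦ k q.1 q.2.1 * k q.1 q.2.2 :=
    (hk.comp_measurable (by fun_prop : Measurable fun q : X × U × U ↦ (q.1, q.2.1))).mul
      (hk.comp_measurable (by fun_prop : Measurable fun q : X × U × U ↦ (q.1, q.2.2)))
  refine ((hg.mul_prod hg).comp_snd μ).bdd_mul (c := C * C) hkk.aestronglyMeasurable
    (.of_forall fun q ↦ ?_)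
  exact norm_mul_le_of_le (hkC _ _) (hkC _ _)

lemma integral_sq_integral_kernel_mul (hk : StronglyMeasurable (Function.uncurry k))
    (hkC : ∀ x u, ‖k x u‖ ≤ C) (hg : Integrable g ν) :
    ∫ x, (∫ u, k x u * g u ∂ν) ^ 2 ∂μ
      = ∫ s, ∫ t, (∫ x, k x s * k x t ∂μ) * (g s * g t) ∂ν ∂ν := by
  have h_int := integrable_kernel_mul_kernel (μ := μ) hk hkC hg
  calc ∫ x, (∫ u, k x u * g u ∂ν) ^ 2 ∂μ
      = ∫ x, ∫ p : U × U, k x p.1 * k x p.2 * (g p.1 * g p.2) ∂ν.prod ν ∂μ := by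
        simp_rw [sq, ← integral_prod_mul, mul_mul_mul_comm]
    _ = ∫ p : U × U, ∫ x, k x p.1 * k x p.2 * (g p.1 * g p.2) ∂μ ∂ν.prod ν :=
        integral_integral_swap h_int
    _ = ∫ s, ∫ t, ∫ x, k x s * k x t * (g s * g t) ∂μ ∂ν ∂ν :=
        integral_prod _ h_int.integral_prod_right
    _ = ∫ s, ∫ t, (∫ x, k x s * k x t ∂μ) * (g s * g t) ∂ν ∂ν := by
        simp_rw [integral_mul_const]

end Fubini

section CharFun

variable (μ : Measure ℝ)

lemma charFun_eq_integral_exp_I_mul (t : ℝ) :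
    charFun μ t = ∫ x, Complex.exp (Complex.I * t * x) ∂μ := by
  simp_rw [charFun_apply_real, mul_assoc, mul_comm Complex.I, mul_assoc]

variable [IsFiniteMeasure μ]

lemma re_charFun_eq_integral_cos (t : ℝ) : (charFun μ t).re = ∫ x, cos (t * x) ∂μ := by
  have h_int : Integrable (fun x : ℝ ↦ Complex.exp (t * x * Complex.I)) μ :=
    .of_bound (C := 1) (by fun_prop) (.of_forall fun x ↦ by
      rw [← Complex.ofReal_mul, Complex.norm_exp_ofReal_mul_I])
  rw [charFun_apply_real, ← RCLike.re_eq_complex_re, ← integral_re h_int]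
  simp_rw [RCLike.re_eq_complex_re, ← Complex.ofReal_mul, Complex.exp_ofReal_mul_I_re]

lemma integral_sin_mul_sin_eq_re_charFun (s t : ℝ) :
    ∫ x, sin (s * x) * sin (t * x) ∂μ
      = (1 / 2) * ((charFun μ (s - t)).re - (charFun μ (s + t)).re) := by
  have hcos (a : ℝ) : Integrable (fun x ↦ cos (a * x)) μ :=
    .of_bound (C := 1) (by fun_prop) (.of_forall fun x ↦ abs_cos_le_one _)
  have hprod (x : ℝ) : sin (s * x) * sin (t * x)
      = (1 / 2) * (cos ((s - t) * x) - cos ((s + t) * x)) := by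
    rw [sub_mul, add_mul, cos_sub, cos_add]
    ring
  simp_rw [hprod, re_charFun_eq_integral_cos]
  rw [integral_const_mul, integral_sub (hcos _) (hcos _)]

lemma integral_sq_integral_sin_mul {ν : Measure ℝ} [SFinite ν] {g : ℝ → ℝ}
    (hg : Integrable g ν) :
    ∫ x, (∫ u, sin (u * x) * g u ∂ν) ^ 2 ∂μ
      = ∫ s, ∫ t, (1 / 2) * ((charFun μ (s - t)).re - (charFun μ (s + t)).re)
          * (g s * g t) ∂ν ∂ν := by
  have hmeas : StronglyMeasurable (Function.uncurry fun x u : ℝ ↦ sin (u * x)) :=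
    Continuous.stronglyMeasurable (by fun_prop)
  rw [integral_sq_integral_kernel_mul hmeas (fun _ _ ↦ abs_sin_le_one _) hg]
  simp_rw [integral_sin_mul_sin_eq_re_charFun]

end CharFun

section Integrability

variable {X : Type*} [MeasurableSpace X] {ν : Measure X} {f g ψ : X → ℝ}

lemma integrable_mul_of_integrable_abs_mul (hf : AEMeasurable f ν)
    (hfg : Integrable (fun x ↦ |f x| * g x) ν) : Integrable (fun x ↦ f x * g x) ν := by
  have hsign : AEStronglyMeasurable (fun x ↦ f x / |f x|) ν :=
    (hf.div hf.abs).aestronglyMeasurable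
  refine (hfg.bdd_mul (c := 1) hsign (.of_forall fun x ↦ ?_)).congr (.of_forall fun x ↦ ?_)
  · rw [norm_div, norm_eq_abs, norm_eq_abs, abs_abs]
    exact div_self_le_one _
  · by_cases hx : f x = 0
    · simp [hx]
    · field_simp

lemma integrable_exp_neg_mul (hψ : AEMeasurable ψ ν) (hψ0 : ∀ x, 0 ≤ ψ x)
    (hf : Integrable f ν) : Integrable (fun x ↦ exp (-ψ x) * f x) ν :=
  hf.bdd_mul (c := 1) hψ.neg.exp.aestronglyMeasurable (.of_forall fun x ↦ by
    simpa only [norm_eq_abs, abs_exp, exp_le_one_iff, Left.neg_nonpos_iff] using hψ0 x)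

end Integrability

theorem stmt12_general (μ : Measure ℝ) [IsFiniteMeasure μ] (ν : Measure ℝ) [SFinite ν]
    (ψ : ℝ → ℝ) (hchar : ∀ t, charFun μ t = exp (-ψ t)) (w : ℝ → ℝ)
    (h_int : Integrable (fun u ↦ exp (-ψ u) * (u * w u)) ν) :
    ∫ x, (∫ u, u * sin (u * x) * exp (-ψ u) * w u ∂ν) ^ 2 ∂μ
      = ∫ s, ∫ t, (1 / 2) * (exp (-ψ (s - t)) - exp (-ψ (s + t)))
          * exp (-(ψ s + ψ t)) * s * t * w s * w t ∂ν ∂ν := by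
  have hre (t : ℝ) : (charFun μ t).re = exp (-ψ t) := by rw [hchar, Complex.ofReal_re]
  have hsin (x u : ℝ) : u * sin (u * x) * exp (-ψ u) * w u
      = sin (u * x) * (exp (-ψ u) * (u * w u)) := by ring
  simp_rw [hsin, integral_sq_integral_sin_mul μ h_int, hre]
  congr! 4 with s t
  rw [neg_add, exp_add]
  ring

/-- The entry `H_{μμ} = E[h_μ(X)²]` of the second-moment matrix of the EISE
estimating function. -/
theorem stmt12 (μ : Measure ℝ) [IsProbabilityMeasure μ] (α : ℝ) (hα : α ∈ Set.Ioc (0 : ℝ) 2)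
    (hchar : ∀ t : ℝ, ∫ x, Complex.exp (Complex.I * t * x) ∂μ = (Real.exp (-|t| ^ α) : ℂ))
    (w : ℝ → ℝ) (hw0 : ∀ u, 0 ≤ w u) (hwe : ∀ u, w (-u) = w u) (hwm : Measurable w)
    (hwi : Integrable (fun u => |u| * w u)) :
    ∫ x, (∫ u : ℝ, u * Real.sin (u * x) * Real.exp (-|u| ^ α) * w u) ^ 2 ∂μ
      = ∫ s : ℝ, ∫ t : ℝ,
          (1 / 2) * (Real.exp (-|s - t| ^ α) - Real.exp (-|s + t| ^ α))
            * Real.exp (-(|s| ^ α + |t| ^ α)) * s * t * w s * w t :=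
  stmt12_general μ volume (|·| ^ α)
    (fun t ↦ (charFun_eq_integral_exp_I_mul μ t).trans (hchar t)) w
    (integrable_exp_neg_mul (by fun_prop) (fun u ↦ by positivity)
      (integrable_mul_of_integrable_abs_mul aemeasurable_id hwi))
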